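/- For every integer t ≥ 4, the monomial w_2^{2^{t-2}}·w_3^{2^{t-2}-1} belongs to the ideal I_{2^t-2,4} of F_2[w_2,w_3,w_4]. -/

import Mathlib

open MvPolynomial

/-- The polynomials `g_r = g_r^{(4)}` in `F_2[w_2,w_3,w_4]` (variables `X 0 = w_2`,
`X 1 = w_3`, `X 2 = w_4`): `g_0 = 1`, `g_r = 0` for `r < 0`, and
`g_r = w_2·g_{r-2} + w_3·g_{r-3} + w_4·g_{r-4}` for `r ≥ 1`. -/
noncomputable def g4 : ℤ → MvPolynomial (Fin 3) (ZMod 2)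
  | r =>
    if r ≤ 0 then (if r = 0 then 1 else 0)
    else X 0 * g4 (r - 2) + X 1 * g4 (r - 3) + X 2 * g4 (r - 4)
  termination_by r => r.toNat
  decreasing_by all_goals omega

/-- The ideal `I_{n,4} = (g_{n-3}, g_{n-2}, g_{n-1}, g_n)` of `F_2[w_2,w_3,w_4]`. -/
noncomputable def I4 (n : ℤ) : Ideal (MvPolynomial (Fin 3) (ZMod 2)) :=
  Ideal.span {g4 (n - 3), g4 (n - 2), g4 (n - 1), g4 n}

theorem g4_neg (r : ℤ) (h : r < 0) : g4 r = 0 := by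
  rw [g4, if_pos h.le, if_neg h.ne]

theorem g4_zero : g4 0 = 1 := by
  rw [g4]; simp

theorem g4_rec (r : ℤ) (h : 1 ≤ r) :
    g4 r = X 0 * g4 (r - 2) + X 1 * g4 (r - 3) + X 2 * g4 (r - 4) := by
  rw [g4, if_neg (by omega)]

theorem g4_rec_pow (s : ℕ) : ∀ r : ℤ, 4 * 2 ^ s - 3 ≤ r →
    g4 r = X 0 ^ 2 ^ s * g4 (r - 2 * 2 ^ s) + X 1 ^ 2 ^ s * g4 (r - 3 * 2 ^ s)
      + X 2 ^ 2 ^ s * g4 (r - 4 * 2 ^ s) := by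
  induction s with
  | zero => intro r h; simpa using g4_rec r (by simpa using h)
  | succ s ih =>
    intro r h
    have hq : (0 : ℤ) < 2 ^ s := by positivity
    simp only [pow_succ (2 : ℤ), pow_succ (2 : ℕ), pow_mul] at h ⊢
    generalize (2 : ℤ) ^ s = q at *
    rw [ih r (by linarith), ih (r - 2 * q) (by linarith), ih (r - 3 * q) (by linarith),
      ih (r - 4 * q) (by linarith)]
    generalize (X 0 : MvPolynomial (Fin 3) (ZMod 2)) ^ 2 ^ s = a
    generalize (X 1 : MvPolynomial (Fin 3) (ZMod 2)) ^ 2 ^ s = b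
    generalize (X 2 : MvPolynomial (Fin 3) (ZMod 2)) ^ 2 ^ s = c
    rw [show r - 2 * q - 2 * q = r - 4 * q by ring, show r - 2 * q - 3 * q = r - 5 * q by ring,
      show r - 2 * q - 4 * q = r - 6 * q by ring, show r - 3 * q - 2 * q = r - 5 * q by ring,
      show r - 3 * q - 3 * q = r - 6 * q by ring, show r - 3 * q - 4 * q = r - 7 * q by ring,
      show r - 4 * q - 2 * q = r - 6 * q by ring, show r - 4 * q - 3 * q = r - 7 * q by ring,
      show r - 4 * q - 4 * q = r - 8 * q by ring, show r - 2 * (q * 2) = r - 4 * q by ring,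
      show r - 3 * (q * 2) = r - 6 * q by ring, show r - 4 * (q * 2) = r - 8 * q by ring]
    have h2 : (2 : MvPolynomial (Fin 3) (ZMod 2)) = 0 := CharTwo.two_eq_zero
    linear_combination (a * b * g4 (r - 5 * q) + a * c * g4 (r - 6 * q)
      + b * c * g4 (r - 7 * q)) * h2

theorem g4_van (s : ℕ) : g4 (2 ^ s - 3) = 0 := by
  induction s using Nat.strong_induction_on with
  | _ s ih =>
    match s, ih with
    | 0, _ => exact g4_neg _ (by norm_num)
    | 1, _ => exact g4_neg _ (by norm_num)
    | s + 2, ih =>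
      have h0 := ih s (by omega)
      have h1 := ih (s + 1) (by omega)
      rw [g4_rec_pow s _ (by ring_nf; exact le_rfl),
        show (2 : ℤ) ^ (s + 2) - 3 - 2 * 2 ^ s = 2 ^ (s + 1) - 3 by ring,
        show (2 : ℤ) ^ (s + 2) - 3 - 3 * 2 ^ s = 2 ^ s - 3 by ring,
        show (2 : ℤ) ^ (s + 2) - 3 - 4 * 2 ^ s = - 3 by ring, h0, h1, g4_neg (-3) (by norm_num)]
      ring

theorem g4_three (s : ℕ) : g4 (3 * 2 ^ s - 3) = X 1 ^ (2 ^ s - 1) := by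
  induction s with
  | zero => simp [g4_zero]
  | succ s ih =>
    have hq : (0 : ℤ) < 2 ^ s := by positivity
    have hq' : 0 < 2 ^ s := by positivity
    rw [g4_rec_pow s _ (by rw [pow_succ]; linarith),
      show (3 : ℤ) * 2 ^ (s + 1) - 3 - 2 * 2 ^ s = 2 ^ (s + 2) - 3 by ring,
      show (3 : ℤ) * 2 ^ (s + 1) - 3 - 3 * 2 ^ s = 3 * 2 ^ s - 3 by ring,
      show (3 : ℤ) * 2 ^ (s + 1) - 3 - 4 * 2 ^ s = 2 ^ (s + 1) - 3 by ring, g4_van, g4_van, ih,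
      mul_zero, mul_zero, zero_add, add_zero, ← pow_add]
    congr 1
    rw [pow_succ]; omega

theorem g4_mem (n : ℤ) (hn : 0 ≤ n) (k : ℕ) : g4 (n - 3 + k) ∈ I4 n := by
  induction k using Nat.strong_induction_on with
  | _ k ih =>
    match k, ih with
    | 0, _ => exact Ideal.subset_span (by simp)
    | 1, _ => exact Ideal.subset_span (by
        rw [show n - 3 + ((1 : ℕ) : ℤ) = n - 2 by push_cast; ring]; simp)
    | 2, _ => exact Ideal.subset_span (by
        rw [show n - 3 + ((2 : ℕ) : ℤ) = n - 1 by push_cast; ring]; simp)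
    | 3, _ => exact Ideal.subset_span (by
        rw [show n - 3 + ((3 : ℕ) : ℤ) = n by push_cast; ring]; simp)
    | k + 4, ih =>
      rw [g4_rec _ (by push_cast; omega),
        show n - 3 + ((k + 4 : ℕ) : ℤ) - 2 = n - 3 + ((k + 2 : ℕ) : ℤ) by push_cast; ring,
        show n - 3 + ((k + 4 : ℕ) : ℤ) - 3 = n - 3 + ((k + 1 : ℕ) : ℤ) by push_cast; ring,
        show n - 3 + ((k + 4 : ℕ) : ℤ) - 4 = n - 3 + (k : ℤ) by push_cast; ring]
      exact add_mem (add_mem (Ideal.mul_mem_left _ _ (ih _ (by omega)))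
        (Ideal.mul_mem_left _ _ (ih _ (by omega)))) (Ideal.mul_mem_left _ _ (ih _ (by omega)))

/-- Lemma 5.3(a): for every `t ≥ 4`, `w_2^{2^{t-2}} w_3^{2^{t-2}-1} ∈ I_{2^t-2,4}`. -/
theorem stmt15 (t : ℕ) (ht : 4 ≤ t) :
    (X 0 : MvPolynomial (Fin 3) (ZMod 2)) ^ 2 ^ (t - 2) * X 1 ^ (2 ^ (t - 2) - 1)
      ∈ I4 (2 ^ t - 2) := by
  obtain ⟨s, rfl⟩ : ∃ s, t = s + 2 := ⟨t - 2, by omega⟩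
  have hq : (0 : ℤ) < 2 ^ s := by positivity
  have key := g4_mem (2 ^ (s + 2) - 2) (by rw [pow_add]; linarith) (2 ^ s + 2)
  rw [show (2 : ℤ) ^ (s + 2) - 2 - 3 + ((2 ^ s + 2 : ℕ) : ℤ) = 5 * 2 ^ s - 3 by push_cast; ring,
    g4_rec_pow s _ (by linarith),
    show (5 : ℤ) * 2 ^ s - 3 - 2 * 2 ^ s = 3 * 2 ^ s - 3 by ring,
    show (5 : ℤ) * 2 ^ s - 3 - 3 * 2 ^ s = 2 ^ (s + 1) - 3 by ring,
    show (5 : ℤ) * 2 ^ s - 3 - 4 * 2 ^ s = 2 ^ s - 3 by ring, g4_van, g4_van, g4_three,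
    mul_zero, mul_zero, add_zero, add_zero] at key
  exact key
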